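/- For every u > 0 and every K ∈ (0,1), P[Tr(A(Σ_n − Σ)) ≥ t_u] ≤ exp(−u/4), where t_u = max{√u·‖AΣ‖_F/√(n(1−K)), u·‖AΣ‖_∞/(nK)}. The same bound holds for P[Tr(A(Σ − Σ_n)) ≥ t_u]. -/

import Mathlib

open MeasureTheory Matrix Real
open scoped ENNReal BigOperators NNReal

noncomputable def gaussianPDF {p : ℕ} (C : Matrix (Fin p) (Fin p) ℝ) (x : Fin p → ℝ) : ℝ≥0∞ :=
  ENNReal.ofReal ((2 * Real.pi) ^ (-(p : ℝ) / 2) * C.det ^ (-(1:ℝ)/2) *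
    Real.exp (-(1/2) * (x ⬝ᵥ C⁻¹.mulVec x)))

/-- The centered multivariate Gaussian measure `N_p(0, C)` on `Fin p → ℝ`. -/
noncomputable def gaussianMeasure {p : ℕ} (C : Matrix (Fin p) (Fin p) ℝ) :
    Measure (Fin p → ℝ) :=
  MeasureTheory.volume.withDensity (gaussianPDF C)

/-- The law of `n` i.i.d. `N_p(0, C)` vectors. -/
noncomputable def iidGaussian (n p : ℕ) (C : Matrix (Fin p) (Fin p) ℝ) :
    Measure (Fin n → Fin p → ℝ) :=
  MeasureTheory.volume.withDensity fun X => ∏ k, gaussianPDF C (X k)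

/-- The sample covariance matrix `Σ_n = (1/n) ∑ X_k X_kᵀ`. -/
noncomputable def sampleCov {n p : ℕ} (X : Fin n → Fin p → ℝ) :
    Matrix (Fin p) (Fin p) ℝ :=
  (n : ℝ)⁻¹ • ∑ k, Matrix.of fun i j => X k i * X k j

/-- Frobenius norm of a matrix. -/
noncomputable def frobNorm {p : ℕ} (M : Matrix (Fin p) (Fin p) ℝ) : ℝ :=
  Real.sqrt (∑ i, ∑ j, (M i j)^2)

/-- Spectral (ℓ²-operator) norm of a matrix. -/
noncomputable def specNorm {p : ℕ} (M : Matrix (Fin p) (Fin p) ℝ) : ℝ :=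
  ‖Matrix.toEuclideanCLM (𝕜 := ℝ) M‖

/-- The matrix `A_j` with entries `1/(2(p-j))` on the `j`-th upper and lower diagonals. -/
noncomputable def lagMatrix (p j : ℕ) : Matrix (Fin p) (Fin p) ℝ :=
  Matrix.of fun k l => if ((k:ℤ) - (l:ℤ)).natAbs = j then 1/(2*((p:ℝ) - j)) else 0

/-- Two-sided class `F(s,S,σ)` of sparse Toeplitz covariance matrices with
diagonal value `σ0`. -/
def memF (p s S : ℕ) (σ σ0 : ℝ) (C : Matrix (Fin p) (Fin p) ℝ) : Prop :=
  C.PosDef ∧ ∃ v : ℕ → ℝ, v 0 = σ0 ∧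
    (∀ i j : Fin p, C i j = v ((i:ℤ) - (j:ℤ)).natAbs) ∧
    ∃ T : Finset ℕ, T ⊆ Finset.Icc 1 S ∧ T.card = s ∧
      (∀ j ∈ T, σ ≤ |v j|) ∧ (∀ j, 1 ≤ j → j ≤ p - 1 → j ∉ T → v j = 0)

/-- One-sided class `F₊(s,S,σ)` of sparse Toeplitz covariance matrices with
diagonal value `σ0`. -/
def memFplus (p s S : ℕ) (σ σ0 : ℝ) (C : Matrix (Fin p) (Fin p) ℝ) : Prop :=
  C.PosDef ∧ ∃ v : ℕ → ℝ, v 0 = σ0 ∧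
    (∀ i j : Fin p, C i j = v ((i:ℤ) - (j:ℤ)).natAbs) ∧
    ∃ T : Finset ℕ, T ⊆ Finset.Icc 1 S ∧ T.card = s ∧
      (∀ j ∈ T, σ ≤ v j) ∧ (∀ j, 1 ≤ j → j ≤ p - 1 → j ∉ T → v j = 0)


theorem lintegral_fin_prod_eq_prod {E : Type*} [MeasureSpace E]
    [SigmaFinite (volume : Measure E)] {n : ℕ} (f : Fin n → E → ℝ≥0∞)
    (hf : ∀ i, Measurable (f i)) :
    ∫⁻ x : Fin n → E, ∏ i, f i (x i) = ∏ i, ∫⁻ x, f i x := by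
  induction n with
  | zero => simp [volume_pi]
  | succ n ih =>
    rw [← ((volume_preserving_piFinSuccAbove (fun _ : Fin (n + 1) => E) 0).symm).lintegral_comp_emb
      (MeasurableEquiv.measurableEmbedding _)]
    simp only [MeasurableEquiv.piFinSuccAbove_symm_apply, Fin.insertNthEquiv,
      Fin.prod_univ_succ, Fin.insertNth_zero, Equiv.coe_fn_mk, Fin.cons_succ,
      Fin.zero_succAbove, cast_eq, Fin.cons_zero]
    rw [← ih _ fun i => hf i.succ]
    exact lintegral_prod_mul (μ := (volume : Measure E)) (ν := (volume : Measure (Fin n → E)))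
      (f := f 0) (g := fun y : Fin n → E => ∏ i, f i.succ (y i)) (hf 0).aemeasurable
      (Finset.measurable_prod _ fun i _ =>
        (hf i.succ).comp (measurable_pi_apply i)).aemeasurable

theorem Real.neg_log_one_sub_le {x : ℝ} (hx : |x| < 1) :
    -Real.log (1 - x) ≤ x + x ^ 2 / (2 * (1 - |x|)) := by
  have hlog := (hasSum_nat_add_iff' 1).2 (Real.hasSum_pow_div_log_of_abs_lt_one hx)
  have hgeom := (hasSum_geometric_of_lt_one (abs_nonneg x) hx).mul_left (x ^ 2 / 2)
  have h := hasSum_le (fun i => ?_) hlog hgeom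
  · simp only [Finset.sum_range_one, zero_add, pow_one, Nat.cast_zero, div_one] at h
    rw [div_mul_eq_div_div, div_eq_mul_inv (x ^ 2 / 2)]
    linarith
  · rw [← sq_abs x]
    calc x ^ (i + 1 + 1) / ((i + 1 : ℕ) + 1 : ℝ) ≤ |x| ^ (i + 1 + 1) / 2 := by
          apply div_le_div₀ (by positivity) _ (by norm_num)
            (by push_cast; linarith [i.cast_nonneg (α := ℝ)])
          rw [← abs_pow]; exact le_abs_self _
      _ = |x| ^ 2 / 2 * |x| ^ i := by ring

theorem Real.inv_sqrt_one_sub_le_exp {s b : ℝ} (hs : |s| ≤ b) (hb : 2 * b < 1) :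
    (√(1 - 2 * s))⁻¹ ≤ Real.exp (s + s ^ 2 / (1 - 2 * b)) := by
  have habs : |2 * s| = 2 * |s| := by rw [abs_mul]; norm_num
  have hlt : |2 * s| < 1 := by linarith
  have hpos : 0 < 1 - 2 * s := by linarith [le_abs_self s]
  rw [← Real.log_le_iff_le_exp (by positivity), Real.log_inv, Real.log_sqrt hpos.le]
  have hle : (2 * s) ^ 2 / (2 * (1 - |2 * s|)) ≤ 2 * (s ^ 2 / (1 - 2 * b)) := by
    calc _ ≤ (2 * s) ^ 2 / (2 * (1 - 2 * b)) := by
          gcongr; linarith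
      _ = _ := by field_simp
  linarith [Real.neg_log_one_sub_le hlt]

theorem lintegral_exp_neg_half_mul_sq {c : ℝ} (hc : 0 < c) :
    ∫⁻ y : ℝ, ENNReal.ofReal (Real.exp (-(c / 2) * y ^ 2)) =
      ENNReal.ofReal (√(2 * π) * (√c)⁻¹) := by
  rw [← ofReal_integral_eq_lintegral_ofReal (integrable_exp_neg_mul_sq (half_pos hc))
    (.of_forall fun _ => (Real.exp_pos _).le), integral_gaussian,
    ← Real.sqrt_inv, ← Real.sqrt_mul (by positivity)]
  congr 2
  field_simp

/-- Simultaneous reduction of a positive definite matrix to the identity and of a symmetric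
matrix to a diagonal one. -/
theorem exists_mul_transpose_eq_and_transpose_mul_mul_eq_diagonal {p : ℕ}
    {C A : Matrix (Fin p) (Fin p) ℝ} (hC : C.PosDef) (hA : A.IsSymm) :
    ∃ (B : Matrix (Fin p) (Fin p) ℝ) (l : Fin p → ℝ),
      B * Bᵀ = C ∧ Bᵀ * A * B = diagonal l ∧ IsUnit B.det := by
  open scoped MatrixOrder ComplexOrder in
  obtain ⟨D, hD⟩ := CStarAlgebra.nonneg_iff_eq_star_mul_self.mp hC.posSemidef.nonneg
  rw [star_eq_conjTranspose, conjTranspose_eq_transpose_of_trivial] at hD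
  have hS : (D * A * Dᵀ).IsHermitian := by
    simp [IsHermitian, conjTranspose_eq_transpose_of_trivial, hA.eq, Matrix.mul_assoc]
  set U : Matrix (Fin p) (Fin p) ℝ := hS.eigenvectorUnitary.1 with hU
  have hUU : U * Uᵀ = 1 := by
    have := Unitary.coe_mul_star_self hS.eigenvectorUnitary
    rwa [Unitary.coe_star, star_eq_conjTranspose, conjTranspose_eq_transpose_of_trivial] at this
  have hdiag := hS.conjStarAlgAut_star_eigenvectorUnitary
  rw [Unitary.conjStarAlgAut_star_apply] at hdiag
  have hBB : Dᵀ * U * (Dᵀ * U)ᵀ = C := by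
    rw [transpose_mul, Matrix.mul_assoc, ← Matrix.mul_assoc U, hUU, hD]; simp
  refine ⟨Dᵀ * U, hS.eigenvalues, hBB, ?_, ?_⟩
  · rw [star_eq_conjTranspose, conjTranspose_eq_transpose_of_trivial, ← hU] at hdiag
    rw [transpose_mul, transpose_transpose]
    simpa [Matrix.mul_assoc, Function.comp_def] using hdiag
  · have := hC.det_pos
    rw [← hBB, det_mul, det_transpose] at this
    exact isUnit_iff_ne_zero.2 fun h => by simp [h] at this

theorem trace_sq_le_frobNorm_sq {p : ℕ} (M : Matrix (Fin p) (Fin p) ℝ) :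
    (M * M).trace ≤ frobNorm M ^ 2 := by
  rw [frobNorm, Real.sq_sqrt (by positivity)]
  simp only [trace, diag_apply, mul_apply]
  have hswap : ∑ i, ∑ j, (M j i) ^ 2 = ∑ i, ∑ j, (M i j) ^ 2 := Finset.sum_comm
  have h : ∑ i, ∑ j, M i j * M j i ≤ ∑ i, ∑ j, ((M i j) ^ 2 + (M j i) ^ 2) / 2 := by
    gcongr with i _ j _
    linarith [two_mul_le_add_sq (M i j) (M j i)]
  simp only [← Finset.sum_div, Finset.sum_add_distrib, hswap] at h
  linarith

theorem abs_eigenvalue_le_specNorm {p : ℕ} {M : Matrix (Fin p) (Fin p) ℝ} {v : Fin p → ℝ}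
    (hv : v ≠ 0) {l : ℝ} (h : M *ᵥ v = l • v) : |l| ≤ specNorm M := by
  have hle := (toEuclideanCLM (𝕜 := ℝ) M).le_opNorm (WithLp.toLp 2 v)
  rw [toEuclideanCLM_toLp, h, WithLp.toLp_smul, norm_smul, Real.norm_eq_abs] at hle
  exact le_of_mul_le_mul_right hle (norm_pos_iff.2 (by simpa using hv))

theorem lintegral_eq_ofReal_abs_det_mul_lintegral_mulVec {p : ℕ} {B : Matrix (Fin p) (Fin p) ℝ}
    (hB : B.det ≠ 0) {g : (Fin p → ℝ) → ℝ≥0∞} (hg : Measurable g) :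
    ∫⁻ x, g x = ENNReal.ofReal |B.det| * ∫⁻ y, g (B *ᵥ y) := by
  have hmap := Real.map_matrix_volume_pi_eq_smul_volume_pi hB
  have hmeas : Measurable (toLin' B) := (toLin' B).continuous_of_finiteDimensional.measurable
  have h : ∫⁻ y, g (B *ᵥ y) = ∫⁻ x, g x ∂(Measure.map (toLin' B) volume) := by
    rw [lintegral_map hg hmeas]; rfl
  rw [h, hmap, lintegral_smul_measure, smul_eq_mul, ← mul_assoc,
    ← ENNReal.ofReal_mul (abs_nonneg _),
    ← abs_mul, mul_inv_cancel₀ hB, abs_one, ENNReal.ofReal_one, one_mul]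

theorem mulVec_dotProduct_mulVec_mulVec {p : ℕ} (B M : Matrix (Fin p) (Fin p) ℝ)
    (y : Fin p → ℝ) : (B *ᵥ y) ⬝ᵥ (M *ᵥ (B *ᵥ y)) = y ⬝ᵥ ((Bᵀ * M * B) *ᵥ y) := by
  rw [Matrix.mul_assoc, ← mulVec_mulVec, ← mulVec_mulVec, dotProduct_mulVec y, vecMul_transpose]

theorem measurable_gaussianPDF {p : ℕ} (C : Matrix (Fin p) (Fin p) ℝ) :
    Measurable (gaussianPDF C) := by
  unfold gaussianPDF
  have : Continuous fun x : Fin p → ℝ => x ⬝ᵥ C⁻¹ *ᵥ x := by fun_prop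
  fun_prop

/-- The moment generating function of a quadratic form in a centered Gaussian vector. -/
theorem lintegral_exp_quadForm_mul_gaussianPDF {p : ℕ} {A B C : Matrix (Fin p) (Fin p) ℝ}
    {l : Fin p → ℝ} (hBC : B * Bᵀ = C) (hBA : Bᵀ * A * B = diagonal l) (hB : IsUnit B.det)
    {τ : ℝ} (hτ : ∀ i, 2 * (τ * l i) < 1) :
    ∫⁻ x, ENNReal.ofReal (Real.exp (τ * (x ⬝ᵥ A *ᵥ x))) * gaussianPDF C x =
      ENNReal.ofReal (∏ i, (√(1 - 2 * (τ * l i)))⁻¹) := by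
  have hdet : B.det ≠ 0 := hB.ne_zero
  have hcontA : Continuous fun x : Fin p → ℝ => x ⬝ᵥ A *ᵥ x := by fun_prop
  have hmeas : Measurable fun x : Fin p → ℝ =>
      ENNReal.ofReal (Real.exp (τ * (x ⬝ᵥ A *ᵥ x))) * gaussianPDF C x :=
    Measurable.mul (by fun_prop) (measurable_gaussianPDF C)
  have hone : Bᵀ * C⁻¹ * B = 1 := by
    have hBt : IsUnit Bᵀ.det := by rwa [det_transpose]
    rw [← hBC, Matrix.mul_inv_rev, ← Matrix.mul_assoc, mul_nonsing_inv _ hBt, Matrix.one_mul,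
      nonsing_inv_mul _ hB]
  have hdetC : C.det ^ (-(1 : ℝ) / 2) = |B.det|⁻¹ := by
    rw [← hBC, det_mul, det_transpose, ← abs_mul_abs_self, ← pow_two, neg_div,
      Real.rpow_neg (by positivity), ← Real.sqrt_eq_rpow, Real.sqrt_sq (abs_nonneg _)]
  have hpi : (2 * π) ^ (-(p : ℝ) / 2) = (√(2 * π) ^ p)⁻¹ := by
    rw [neg_div, Real.rpow_neg (by positivity), Real.sqrt_eq_rpow, ← Real.rpow_natCast,
      ← Real.rpow_mul (by positivity)]
    ring_nf
  have hint : ∀ y : Fin p → ℝ,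
      ENNReal.ofReal (Real.exp (τ * ((B *ᵥ y) ⬝ᵥ A *ᵥ (B *ᵥ y)))) * gaussianPDF C (B *ᵥ y) =
        ENNReal.ofReal ((√(2 * π) ^ p)⁻¹ * |B.det|⁻¹) *
          ∏ i, ENNReal.ofReal (Real.exp (-((1 - 2 * (τ * l i)) / 2) * y i ^ 2)) := by
    intro y
    rw [gaussianPDF, mulVec_dotProduct_mulVec_mulVec, mulVec_dotProduct_mulVec_mulVec, hBA, hone,
      hdetC, hpi, ← ENNReal.ofReal_mul (Real.exp_pos _).le,
      ← ENNReal.ofReal_prod_of_nonneg fun _ _ => (Real.exp_pos _).le,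
      ← ENNReal.ofReal_mul (by positivity), ← Real.exp_sum, mul_left_comm, ← Real.exp_add]
    congr 3
    simp only [one_mulVec, dotProduct, mulVec_diagonal, Finset.mul_sum,
      ← Finset.sum_add_distrib]
    exact Finset.sum_congr rfl fun i _ => by ring
  rw [lintegral_eq_ofReal_abs_det_mul_lintegral_mulVec hdet hmeas]
  simp only [hint]
  rw [lintegral_const_mul _ (by fun_prop),
    lintegral_fin_prod_eq_prod
      (fun i z => ENNReal.ofReal (Real.exp (-((1 - 2 * (τ * l i)) / 2) * z ^ 2)))
      (fun i => by fun_prop)]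
  simp only [fun i => lintegral_exp_neg_half_mul_sq (sub_pos.2 (hτ i))]
  rw [← ENNReal.ofReal_prod_of_nonneg fun _ _ => by positivity,
    ← ENNReal.ofReal_mul (by positivity), ← ENNReal.ofReal_mul (by positivity),
    Finset.prod_mul_distrib, Finset.prod_const, Finset.card_univ, Fintype.card_fin]
  congr 1
  have : |B.det| ≠ 0 := abs_ne_zero.2 hdet
  field_simp

theorem trace_mul_sampleCov_sub {n p : ℕ} (A C : Matrix (Fin p) (Fin p) ℝ)
    (X : Fin n → Fin p → ℝ) :
    (A * (sampleCov X - C)).trace = (n : ℝ)⁻¹ * ∑ k, X k ⬝ᵥ A *ᵥ X k - (A * C).trace := by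
  have h : ∀ k, (A * Matrix.of fun i j => X k i * X k j).trace = X k ⬝ᵥ A *ᵥ X k := by
    intro k
    rw [dotProduct_comm, ← trace_vecMulVec, ← mul_vecMulVec]
    rfl
  rw [Matrix.mul_sub, trace_sub, sampleCov, Matrix.mul_smul, trace_smul, Matrix.mul_sum, trace_sum]
  simp only [h, smul_eq_mul]

/-- Chernoff bound for the trace of `A * (sampleCov X - C)`. -/
theorem iidGaussian_trace_ge_le_exp {p n : ℕ} (hn : 0 < n)
    {A C : Matrix (Fin p) (Fin p) ℝ} (hC : C.PosDef) (hA : A.IsSymm) {τ t : ℝ} (hτ : 0 ≤ τ)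
    (hτn : 2 * (τ * specNorm (A * C)) < 1) :
    iidGaussian n p C {X | t ≤ (A * (sampleCov X - C)).trace} ≤
      ENNReal.ofReal (Real.exp (n * (τ ^ 2 * frobNorm (A * C) ^ 2 /
        (1 - 2 * (τ * specNorm (A * C))) - τ * t))) := by
  obtain ⟨B, l, hBC, hBA, hB⟩ := exists_mul_transpose_eq_and_transpose_mul_mul_eq_diagonal hC hA
  have hBt : IsUnit Bᵀ.det := by rwa [det_transpose]
  have htr : (A * C).trace = ∑ i, l i := by
    rw [← hBC, ← Matrix.mul_assoc, trace_mul_comm, ← Matrix.mul_assoc, hBA, trace_diagonal]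
  have htr2 : ∑ i, l i ^ 2 ≤ frobNorm (A * C) ^ 2 := by
    refine le_of_eq_of_le ?_ (trace_sq_le_frobNorm_sq (A * C))
    calc ∑ i, l i ^ 2 = (Bᵀ * A * B * (Bᵀ * A * B)).trace := by
          simp [hBA, diagonal_mul_diagonal, trace_diagonal, pow_two]
      _ = (Bᵀ * (A * B * Bᵀ * A * B)).trace := by simp only [Matrix.mul_assoc]
      _ = (A * C * (A * C)).trace := by
          rw [trace_mul_comm, ← hBC]; simp only [Matrix.mul_assoc]
  have hl : ∀ i, |l i| ≤ specNorm (A * C) := by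
    intro i
    have hv : Bᵀ *ᵥ (Bᵀ⁻¹ *ᵥ Pi.single i 1) = Pi.single i 1 := by
      rw [mulVec_mulVec, mul_nonsing_inv _ hBt, one_mulVec]
    refine abs_eigenvalue_le_specNorm (v := Bᵀ⁻¹ *ᵥ Pi.single i 1) (fun h => ?_) ?_
    · rw [h, mulVec_zero] at hv
      simpa using congrFun hv i
    · have hAB : A * B = Bᵀ⁻¹ * diagonal l := by
        rw [← hBA, Matrix.mul_assoc, ← Matrix.mul_assoc, nonsing_inv_mul _ hBt, Matrix.one_mul]
      rw [← hBC, ← Matrix.mul_assoc, ← mulVec_mulVec, hv, hAB, ← mulVec_mulVec,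
        diagonal_mulVec_single, mul_one, ← mulVec_smul, ← Pi.single_smul, smul_eq_mul, mul_one]
  have habs : ∀ i, |τ * l i| ≤ τ * specNorm (A * C) := fun i => by
    rw [abs_mul, abs_of_nonneg hτ]; gcongr; exact hl i
  have hden : 0 < 1 - 2 * (τ * specNorm (A * C)) := by linarith
  have hmgf : ∫⁻ x, ENNReal.ofReal (Real.exp (τ * (x ⬝ᵥ A *ᵥ x))) * gaussianPDF C x ≤
      ENNReal.ofReal (Real.exp (τ * (A * C).trace +
        τ ^ 2 * frobNorm (A * C) ^ 2 / (1 - 2 * (τ * specNorm (A * C))))) := by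
    rw [lintegral_exp_quadForm_mul_gaussianPDF hBC hBA hB fun i => by
      linarith [habs i, le_abs_self (τ * l i)]]
    gcongr
    calc _ ≤ ∏ i, Real.exp (τ * l i + (τ * l i) ^ 2 / (1 - 2 * (τ * specNorm (A * C)))) :=
          Finset.prod_le_prod (fun _ _ => by positivity) fun i _ =>
            Real.inv_sqrt_one_sub_le_exp (habs i) hτn
      _ = Real.exp (τ * (A * C).trace +
            τ ^ 2 * (∑ i, l i ^ 2) / (1 - 2 * (τ * specNorm (A * C)))) := by
          rw [← Real.exp_sum, Finset.sum_add_distrib, htr, Finset.mul_sum, Finset.mul_sum,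
            Finset.sum_div]
          simp only [mul_pow]
      _ ≤ _ := by gcongr
  have hcontA : Continuous fun x : Fin p → ℝ => x ⬝ᵥ A *ᵥ x := by fun_prop
  have hquad : ∀ k : Fin n, Measurable fun X : Fin n → Fin p → ℝ => X k ⬝ᵥ A *ᵥ X k :=
    fun k => hcontA.measurable.comp (measurable_pi_apply k)
  have hset : MeasurableSet {X : Fin n → Fin p → ℝ | t ≤ (A * (sampleCov X - C)).trace} := by
    simp only [trace_mul_sampleCov_sub]
    exact measurableSet_le measurable_const (by fun_prop)
  have hn' : (n : ℝ) ≠ 0 := by exact_mod_cast hn.ne'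
  rw [iidGaussian, withDensity_apply _ hset]
  calc _ ≤ ∫⁻ X in {X : Fin n → Fin p → ℝ | t ≤ (A * (sampleCov X - C)).trace},
        ENNReal.ofReal (Real.exp (-(n * τ * (t + (A * C).trace)))) *
          ∏ k, (ENNReal.ofReal (Real.exp (τ * (X k ⬝ᵥ A *ᵥ X k))) * gaussianPDF C (X k)) := by
        refine setLIntegral_mono' hset fun X hX => ?_
        rw [Set.mem_ofPred_eq, trace_mul_sampleCov_sub] at hX
        rw [Finset.prod_mul_distrib, ← mul_assoc,
          ← ENNReal.ofReal_prod_of_nonneg fun _ _ => (Real.exp_pos _).le, ← Real.exp_sum,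
          ← ENNReal.ofReal_mul (Real.exp_pos _).le, ← Real.exp_add, ← Finset.mul_sum]
        refine le_mul_of_one_le_left' (ENNReal.one_le_ofReal.2 (Real.one_le_exp ?_))
        have h := mul_le_mul_of_nonneg_left hX (by positivity : 0 ≤ (n : ℝ) * τ)
        have h' : (n : ℝ) * τ * ((n : ℝ)⁻¹ * ∑ k, X k ⬝ᵥ A *ᵥ X k) =
            τ * ∑ k, X k ⬝ᵥ A *ᵥ X k := by field_simp
        linarith
    _ ≤ ∫⁻ X : Fin n → Fin p → ℝ,
        ENNReal.ofReal (Real.exp (-(n * τ * (t + (A * C).trace)))) *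
          ∏ k, (ENNReal.ofReal (Real.exp (τ * (X k ⬝ᵥ A *ᵥ X k))) * gaussianPDF C (X k)) :=
        setLIntegral_le_lintegral _ _
    _ = ENNReal.ofReal (Real.exp (-(n * τ * (t + (A * C).trace)))) *
          (∫⁻ x, ENNReal.ofReal (Real.exp (τ * (x ⬝ᵥ A *ᵥ x))) * gaussianPDF C x) ^ n := by
        rw [lintegral_const_mul' _ _ ENNReal.ofReal_ne_top,
          lintegral_fin_prod_eq_prod
            (fun _ x => ENNReal.ofReal (Real.exp (τ * (x ⬝ᵥ A *ᵥ x))) * gaussianPDF C x)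
            fun _ => Measurable.mul (by fun_prop) (measurable_gaussianPDF C),
          Finset.prod_const, Finset.card_univ, Fintype.card_fin]
    _ ≤ ENNReal.ofReal (Real.exp (-(n * τ * (t + (A * C).trace)))) *
          ENNReal.ofReal (Real.exp (τ * (A * C).trace +
            τ ^ 2 * frobNorm (A * C) ^ 2 / (1 - 2 * (τ * specNorm (A * C))))) ^ n := by
        gcongr
    _ = _ := by
        rw [← ENNReal.ofReal_pow (Real.exp_pos _).le, ← Real.exp_nat_mul,
          ← ENNReal.ofReal_mul (Real.exp_pos _).le, ← Real.exp_add]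
        ring_nf

theorem frobNorm_pos {p : ℕ} {M : Matrix (Fin p) (Fin p) ℝ} (hM : M ≠ 0) : 0 < frobNorm M := by
  refine Real.sqrt_pos.2 (lt_of_le_of_ne (by positivity) fun h => hM ?_)
  ext i j
  have hi := (Finset.sum_eq_zero_iff_of_nonneg fun _ _ => by positivity).1 h.symm i
    (Finset.mem_univ i)
  have hij := (Finset.sum_eq_zero_iff_of_nonneg fun _ _ => by positivity).1 hi j
    (Finset.mem_univ j)
  simpa using hij

theorem frobNorm_neg {p : ℕ} (M : Matrix (Fin p) (Fin p) ℝ) : frobNorm (-M) = frobNorm M := by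
  simp [frobNorm]

theorem specNorm_neg {p : ℕ} (M : Matrix (Fin p) (Fin p) ℝ) : specNorm (-M) = specNorm M := by
  simp [specNorm]

theorem iidGaussian_trace_ge_max_le_exp {p n : ℕ} (hn : 0 < n)
    {A C : Matrix (Fin p) (Fin p) ℝ} (hC : C.PosDef) (hA : A.IsSymm) (hAC : A * C ≠ 0)
    {u K : ℝ} (hu : 0 < u) (hK : K ∈ Set.Ioo (0 : ℝ) 1) :
    iidGaussian n p C {X | max (√u * frobNorm (A * C) / √(n * (1 - K)))
        (u * specNorm (A * C) / (n * K)) ≤ (A * (sampleCov X - C)).trace} ≤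
      ENNReal.ofReal (Real.exp (-u / 4)) := by
  obtain ⟨hK0, hK1⟩ := hK
  have hF : 0 < frobNorm (A * C) := frobNorm_pos hAC
  have hL : 0 ≤ specNorm (A * C) := norm_nonneg _
  have hn' : (0 : ℝ) < n := by exact_mod_cast hn
  have hK1' : 0 < 1 - K := sub_pos.2 hK1
  set F := frobNorm (A * C)
  set L := specNorm (A * C)
  set t := max (√u * F / √(n * (1 - K))) (u * L / (n * K))
  have ht : 0 < t := lt_max_of_lt_left (by positivity)
  have hFt : u * F ^ 2 ≤ t ^ 2 * (n * (1 - K)) := by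
    have h : √u * F / √(n * (1 - K)) ≤ t := le_max_left _ _
    rw [div_le_iff₀ (by positivity)] at h
    have h2 := pow_le_pow_left₀ (by positivity) h 2
    rwa [mul_pow, mul_pow, Real.sq_sqrt hu.le, Real.sq_sqrt (by positivity)] at h2
  have hLt : u * L ≤ t * (n * K) := by
    have h : u * L / (n * K) ≤ t := le_max_right _ _
    rwa [div_le_iff₀ (by positivity)] at h
  have hD : 0 < F ^ 2 + L * t := by positivity
  have hτ : 1 - 2 * (t / (2 * (F ^ 2 + L * t)) * L) = F ^ 2 / (F ^ 2 + L * t) := by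
    field_simp; ring
  have hτpos : 0 < F ^ 2 / (F ^ 2 + L * t) := by positivity
  refine (iidGaussian_trace_ge_le_exp hn hC hA (τ := t / (2 * (F ^ 2 + L * t)))
    (by positivity) (by linarith)).trans ?_
  gcongr
  rw [hτ]
  have hval : n * ((t / (2 * (F ^ 2 + L * t))) ^ 2 * F ^ 2 / (F ^ 2 / (F ^ 2 + L * t)) -
      t / (2 * (F ^ 2 + L * t)) * t) = -(n * t ^ 2 / (F ^ 2 + L * t)) / 4 := by
    field_simp; ring
  rw [hval]
  gcongr
  rw [le_div_iff₀ hD]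
  nlinarith [mul_le_mul_of_nonneg_right hLt ht.le]

/-- Bernstein-type deviation bound for `Tr(A(Σ_n − Σ))`. -/
theorem deviation_trace_sampleCov {p n : ℕ} (hn : 0 < n)
    (Cov : Matrix (Fin p) (Fin p) ℝ) (hCov : Cov.PosDef)
    (A : Matrix (Fin p) (Fin p) ℝ) (hA : A.IsSymm) (hAC : A * Cov ≠ 0)
    (u K : ℝ) (hu : 0 < u) (hK : K ∈ Set.Ioo (0:ℝ) 1) :
    (iidGaussian n p Cov) {X | Matrix.trace (A * (sampleCov X - Cov)) ≥
        max (Real.sqrt u * frobNorm (A * Cov) / Real.sqrt (n * (1 - K)))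
          (u * specNorm (A * Cov) / (n * K))}
      ≤ ENNReal.ofReal (Real.exp (-u/4)) ∧
    (iidGaussian n p Cov) {X | Matrix.trace (A * (Cov - sampleCov X)) ≥
        max (Real.sqrt u * frobNorm (A * Cov) / Real.sqrt (n * (1 - K)))
          (u * specNorm (A * Cov) / (n * K))}
      ≤ ENNReal.ofReal (Real.exp (-u/4)) := by
  refine ⟨iidGaussian_trace_ge_max_le_exp hn hCov hA hAC hu hK, ?_⟩
  have h := iidGaussian_trace_ge_max_le_exp hn hCov hA.neg (by simpa using hAC) hu hK
  simp only [Matrix.neg_mul, frobNorm_neg, specNorm_neg] at h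
  simpa only [← Matrix.mul_neg, neg_sub] using h
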